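/- arXiv:2411.06745 — 2 statements merged into one kernel-verified Lean document; each statement's English description precedes it below -/
import Mathlib

section
/- For every integer r ≥ 1, every σ ∈ M_{r,∞}, every τ ∈ Aut(T_∞), and every word x, one has P_r(σ∘τ, x) = P_r(σ) · P_r(τ, x) in ℤ₂. -/
/-- Nodes of the infinite binary rooted tree `T_∞` are finite words over `{a,b}`,
encoded as `List Bool` with `a = false` and `b = true`; children of `w` are
`w ++ [false]` and `w ++ [true]`. An automorphism of `T_∞`. -/
def IsTreeAut (σ : List Bool → List Bool) : Prop :=
  Function.Bijective σ ∧ (∀ w, (σ w).length = w.length) ∧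
    ∀ w s, ∃ t, σ (w ++ [s]) = σ w ++ [t]

/-- The parity `Par(σ,x) ∈ {0,1}`: `0` if `σ(xa) = σ(x)a`, and `1` otherwise. -/
def par (σ : List Bool → List Bool) (x : List Bool) : ℕ :=
  if σ (x ++ [false]) = σ x ++ [false] then 0 else 1

/-- `W(r,i)`: the words `s₁ ⋯ s_{ri−1}` of length `r*i − 1` over `{a,b}` with
`s_j = a` whenever `r ∣ j`. -/
noncomputable def Wset (r i : ℕ) : Finset (List Bool) :=
  ((Finset.univ : Finset (Fin (r*i-1) → Bool)).filter
    (fun s => ∀ j : Fin (r*i-1), r ∣ (j:ℕ)+1 → s j = false)).image List.ofFn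

/-- `Q_r(σ,x) := Σ_{i≥1} 2^i Σ_{w ∈ W(r,i)} Par(σ, xw)` in `ℤ₂`. -/
noncomputable def Qr (r : ℕ) (σ : List Bool → List Bool) (x : List Bool) : ℤ_[2] :=
  ∑' i : ℕ, (2:ℤ_[2])^(i+1) * ∑ w ∈ Wset r (i+1), (par σ (x ++ w) : ℤ_[2])

/-- `P_r(σ,x) := (−1)^{Par(σ,x)} + Q_r(σ,xb) − Q_r(σ,xa)` in `ℤ₂`. -/
noncomputable def Pr (r : ℕ) (σ : List Bool → List Bool) (x : List Bool) : ℤ_[2] :=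
  (-1:ℤ_[2])^(par σ x) + Qr r σ (x ++ [true]) - Qr r σ (x ++ [false])

/-- `M_{r,∞}`: tree automorphisms for which `P_r(σ,·)` is constant. -/
def Mset (r : ℕ) : Set (List Bool → List Bool) :=
  {σ | IsTreeAut σ ∧ ∀ x₁ x₂ : List Bool, Pr r σ x₁ = Pr r σ x₂}

/-- `B_{r,∞}`: elements of `M_{r,∞}` with common value `P_r(σ) = 1`. -/
def Bset (r : ℕ) : Set (List Bool → List Bool) :=
  {σ | σ ∈ Mset r ∧ Pr r σ [] = 1}

/-!
The heart of the matter is the cocycle relation `Q(σ ∘ τ, x) = P(σ) Q(τ, x) + Q(σ, τ x)`.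
Splitting off the first block of length `r` gives
`Q(σ, x) = 2 ∑ᵤ (Par(σ, xu) + Q(σ, xua))`, with `u` ranging over all words of length `r - 1`.
Applying this to `σ ∘ τ`, `τ` and `σ`, and using that `P(σ, ·)` is constant, shows that the defect
`D` of the cocycle relation satisfies `D(x) = 2 ∑ᵤ D(xua)`. Iterating, `D(x)` is divisible by every
power of `2` in `ℤ₂`, hence vanishes.
-/

theorem eq_zero_of_eq_mul_sum {R α ι : Type*} [CommSemiring R] [IsCancelMulZero R]
    [WfDvdMonoid R] {a : R} (ha : ¬IsUnit a) {D : α → R} (S : Finset ι) (g : α → ι → α)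
    (hD : ∀ x, D x = a * ∑ u ∈ S, D (g x u)) (x : α) : D x = 0 := by
  have pow_dvd (n : ℕ) : ∀ y, a ^ n ∣ D y := by
    induction n with
    | zero => simp
    | succ n ih =>
      intro y
      rw [hD, pow_succ']
      exact mul_dvd_mul_left a (Finset.dvd_sum fun u _ => ih _)
  by_contra hne
  obtain ⟨n, hn⟩ := FiniteMultiplicity.of_not_isUnit ha hne
  exact hn (pow_dvd (n + 1) x)

theorem summable_prime_pow_mul (p : ℕ) [Fact p.Prime] (c : ℕ → ℤ_[p]) :
    Summable fun i => (p : ℤ_[p]) ^ i * c i := by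
  have hp : (p : ℝ)⁻¹ < 1 := inv_lt_one_of_one_lt₀ (mod_cast (Fact.out : p.Prime).one_lt)
  refine .of_norm_bounded (summable_geometric_of_lt_one (by positivity) hp) fun i => ?_
  rw [norm_mul, norm_pow, PadicInt.norm_p]
  exact mul_le_of_le_one_right (by positivity) (PadicInt.norm_le_one _)

namespace Wset

theorem mem_iff {r i : ℕ} {w : List Bool} :
    w ∈ Wset r i ↔ w.length = r * i - 1 ∧ ∀ j (h : j < w.length), r ∣ j + 1 → w[j] = false := by
  simp only [Wset, Finset.mem_image, Finset.mem_filter, Finset.mem_univ, true_and]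
  constructor
  · rintro ⟨s, hs, rfl⟩
    exact ⟨List.length_ofFn, fun j _ hd => by rw [List.getElem_ofFn]; exact hs _ hd⟩
  · rintro ⟨hl, h⟩
    exact ⟨fun j => w[(j : ℕ)], fun j hd => h _ _ hd, List.ext_getElem (by simp [hl]) (by simp)⟩

theorem mem_one_iff {r : ℕ} {w : List Bool} : w ∈ Wset r 1 ↔ w.length = r - 1 := by
  rw [mem_iff, mul_one, and_iff_left_iff_imp]
  intro hl j hj hd
  have := Nat.le_of_dvd (by omega) hd
  omega

theorem append_false_cons_mem_succ_iff {r i : ℕ} (hr : 1 ≤ r) (hi : 1 ≤ i) {u w : List Bool}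
    (hu : u ∈ Wset r 1) : u ++ false :: w ∈ Wset r (i + 1) ↔ w ∈ Wset r i := by
  rw [mem_one_iff] at hu
  have hpos : 1 ≤ r * i := Nat.mul_pos hr hi
  have shift (k : ℕ) : u.length + 1 + k + 1 = r + (k + 1) := by omega
  rw [mem_iff, mem_iff, mul_add_one]
  have hlen : (u ++ false :: w).length = r + w.length := by
    rw [List.length_append, List.length_cons]
    omega
  refine and_congr (by omega) ⟨fun h k hk hd => ?_, fun h j hj hd => ?_⟩
  · have := h (u.length + 1 + k) (by omega) (shift k ▸ (Nat.dvd_add_right dvd_rfl).2 hd)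
    simpa [List.getElem_append, add_assoc, add_comm 1 k] using this
  · have hle : u.length ≤ j := by
      have := Nat.le_of_dvd j.succ_pos hd
      omega
    obtain rfl | hlt := hle.eq_or_lt
    · simp
    · obtain ⟨k, rfl⟩ := Nat.exists_eq_add_of_le hlt
      have := h k (by omega) ((Nat.dvd_add_right dvd_rfl).1 (shift k ▸ hd))
      simpa [List.getElem_append, add_assoc, add_comm 1 k] using this

theorem exists_append_false_cons_of_mem_succ {r i : ℕ} (hr : 1 ≤ r) (hi : 1 ≤ i)
    {v : List Bool} (hv : v ∈ Wset r (i + 1)) :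
    ∃ u ∈ Wset r 1, ∃ w ∈ Wset r i, u ++ false :: w = v := by
  obtain ⟨hl, hfalse⟩ := mem_iff.1 hv
  have hpos : 1 ≤ r * i := Nat.mul_pos hr hi
  rw [mul_add_one] at hl
  have hlt : r - 1 < v.length := by omega
  have hu : v.take (r - 1) ∈ Wset r 1 := by
    rw [mem_one_iff, List.length_take_of_le hlt.le]
  have hsplit : v.take (r - 1) ++ false :: v.drop r = v := by
    have hget : v[r - 1] = false := hfalse _ hlt (by rw [Nat.sub_add_cancel hr])
    have hdrop := List.drop_eq_getElem_cons hlt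
    rw [hget, Nat.sub_add_cancel hr] at hdrop
    rw [← hdrop, List.take_append_drop]
  exact ⟨_, hu, _, (append_false_cons_mem_succ_iff hr hi hu).1 (hsplit.symm ▸ hv), hsplit⟩

theorem sum_succ {M : Type*} [AddCommMonoid M] {r i : ℕ} (hr : 1 ≤ r) (hi : 1 ≤ i)
    (f : List Bool → M) :
    ∑ v ∈ Wset r (i + 1), f v = ∑ u ∈ Wset r 1, ∑ w ∈ Wset r i, f (u ++ false :: w) := by
  rw [← Finset.sum_product']
  symm
  refine Finset.sum_nbij (fun p => p.1 ++ false :: p.2) ?_ ?_ ?_ fun _ _ => rfl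
  · rintro ⟨u, w⟩ h
    obtain ⟨hu, hw⟩ := Finset.mem_product.1 h
    exact (append_false_cons_mem_succ_iff hr hi hu).2 hw
  · rintro ⟨u, w⟩ h ⟨u', w'⟩ h' heq
    have hlen : u.length = u'.length :=
      (mem_one_iff.1 (Finset.mem_product.1 h).1).trans
        (mem_one_iff.1 (Finset.mem_product.1 h').1).symm
    simpa using List.append_inj heq hlen
  · intro v hv
    obtain ⟨u, hu, w, hw, rfl⟩ := exists_append_false_cons_of_mem_succ hr hi hv
    exact ⟨(u, w), Finset.mem_product.2 ⟨hu, hw⟩, rfl⟩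

end Wset

theorem par_eq_zero_or_one (σ : List Bool → List Bool) (x : List Bool) :
    par σ x = 0 ∨ par σ x = 1 := by
  unfold par
  split_ifs <;> simp

/-- The section of `τ` at the node `x`: the map induced by `τ` from the subtree below `x` to the
subtree below `τ x`, both identified with the whole tree. -/
def treeSection (τ : List Bool → List Bool) (x u : List Bool) : List Bool :=
  (τ (x ++ u)).drop x.length

namespace IsTreeAut

variable {σ τ : List Bool → List Bool}

theorem apply_append (hτ : IsTreeAut τ) (x u : List Bool) :
    τ (x ++ u) = τ x ++ treeSection τ x u := by
  have prefix_apply : τ x <+: τ (x ++ u) := by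
    induction u using List.reverseRecOn with
    | nil => simp
    | append_singleton u s ih =>
      obtain ⟨t, ht⟩ := hτ.2.2 (x ++ u) s
      rw [← List.append_assoc, ht]
      exact ih.trans (List.prefix_append _ _)
  rw [treeSection, ← hτ.2.1 x]
  exact (List.prefix_iff_eq_append.1 prefix_apply).symm

theorem length_treeSection (hτ : IsTreeAut τ) (x u : List Bool) :
    (treeSection τ x u).length = u.length := by
  simp [treeSection, hτ.2.1]

theorem treeSection_injective (hτ : IsTreeAut τ) (x : List Bool) :
    Function.Injective (treeSection τ x) := fun u v h =>
  List.append_cancel_left (hτ.1.injective (by rw [hτ.apply_append, h, ← hτ.apply_append]))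

theorem sum_apply_append {M : Type*} [AddCommMonoid M] (hτ : IsTreeAut τ) (r : ℕ)
    (x : List Bool) (f : List Bool → M) :
    ∑ u ∈ Wset r 1, f (τ (x ++ u)) = ∑ u ∈ Wset r 1, f (τ x ++ u) := by
  have mapsTo : Set.MapsTo (treeSection τ x) (Wset r 1) (Wset r 1) := fun u hu => by
    rw [Finset.mem_coe, Wset.mem_one_iff] at hu ⊢
    rw [hτ.length_treeSection, hu]
  have injOn := (hτ.treeSection_injective x).injOn (s := Wset r 1)
  exact Finset.sum_nbij (treeSection τ x) mapsTo injOn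
    (Finset.surjOn_of_injOn_of_card_le _ mapsTo injOn le_rfl)
    fun u _ => by rw [hτ.apply_append]

theorem apply_child (hτ : IsTreeAut τ) (x : List Bool) (s : Bool) :
    τ (x ++ [s]) = τ x ++ [if par τ x = 0 then s else !s] := by
  obtain ⟨t, ht⟩ := hτ.2.2 x false
  obtain ⟨t', ht'⟩ := hτ.2.2 x true
  have hne : t ≠ t' := by
    rintro rfl
    simpa using hτ.1.injective (ht.trans ht'.symm)
  cases s <;> cases t <;> cases t' <;> simp_all [par]

theorem par_comp (hσ : IsTreeAut σ) (hτ : IsTreeAut τ) (x : List Bool) :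
    par (σ ∘ τ) x = (par σ (τ x) + par τ x) % 2 := by
  have hdef : par (σ ∘ τ) x = if σ (τ (x ++ [false])) = σ (τ x) ++ [false] then 0 else 1 := rfl
  rw [hdef, hτ.apply_child, hσ.apply_child]
  rcases par_eq_zero_or_one σ (τ x) with hs | hs <;>
    rcases par_eq_zero_or_one τ x with ht | ht <;> simp [hs, ht]

theorem neg_one_pow_par_comp {R : Type*} [Ring R] (hσ : IsTreeAut σ) (hτ : IsTreeAut τ)
    (x : List Bool) : (-1 : R) ^ par (σ ∘ τ) x = (-1) ^ par σ (τ x) * (-1) ^ par τ x := by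
  rw [hσ.par_comp hτ, ← neg_one_pow_eq_pow_mod_two, pow_add]

theorem Qr_apply_true_sub_false (hτ : IsTreeAut τ) (r : ℕ) (σ : List Bool → List Bool)
    (x : List Bool) :
    Qr r σ (τ (x ++ [true])) - Qr r σ (τ (x ++ [false])) =
      (-1) ^ par τ x * (Pr r σ (τ x) - (-1) ^ par σ (τ x)) := by
  rw [hτ.apply_child, hτ.apply_child, Pr]
  rcases par_eq_zero_or_one τ x with ht | ht <;>
    simp only [ht, if_true, if_false, one_ne_zero, pow_zero, pow_one, Bool.not_true,
      Bool.not_false] <;> ring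

theorem par_comp_add_Qr_apply_false (hσ : IsTreeAut σ) (hτ : IsTreeAut τ) (r : ℕ)
    (x : List Bool) :
    par (σ ∘ τ) x + Qr r σ (τ (x ++ [false])) =
      Pr r σ (τ x) * par τ x + (par σ (τ x) + Qr r σ (τ x ++ [false])) := by
  rw [hσ.par_comp hτ, hτ.apply_child, Pr]
  rcases par_eq_zero_or_one σ (τ x) with hs | hs <;>
    rcases par_eq_zero_or_one τ x with ht | ht <;> simp [hs, ht]

end IsTreeAut

theorem Qr_summable (r : ℕ) (σ : List Bool → List Bool) (x : List Bool) :
    Summable fun i : ℕ =>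
      (2 : ℤ_[2]) ^ (i + 1) * ∑ w ∈ Wset r (i + 1), (par σ (x ++ w) : ℤ_[2]) := by
  have summable_from_zero :=
    summable_prime_pow_mul 2 fun i => ∑ w ∈ Wset r i, (par σ (x ++ w) : ℤ_[2])
  simpa only [Nat.cast_ofNat] using (summable_nat_add_iff 1).2 summable_from_zero

theorem Qr_eq_two_mul_sum {r : ℕ} (hr : 1 ≤ r) (σ : List Bool → List Bool) (x : List Bool) :
    Qr r σ x = 2 * ∑ u ∈ Wset r 1, ((par σ (x ++ u) : ℤ_[2]) + Qr r σ (x ++ u ++ [false])) := by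
  have tail : ∑' i : ℕ, (2 : ℤ_[2]) ^ (i + 1 + 1) *
        ∑ w ∈ Wset r (i + 1 + 1), (par σ (x ++ w) : ℤ_[2]) =
      2 * ∑ u ∈ Wset r 1, Qr r σ (x ++ u ++ [false]) := by
    simp only [Qr]
    rw [← Summable.tsum_finsetSum fun u _ => Qr_summable r σ _,
      ← Summable.tsum_mul_left _ (summable_sum fun u _ => Qr_summable r σ _)]
    refine tsum_congr fun i => ?_
    rw [Wset.sum_succ hr i.succ_pos, ← Finset.mul_sum, pow_succ', mul_assoc]
    simp only [List.append_assoc, List.singleton_append]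
  rw [Finset.sum_add_distrib, mul_add, ← tail, Qr, (Qr_summable r σ x).tsum_eq_zero_add, zero_add,
    pow_one]

theorem Qr_comp {r : ℕ} (hr : 1 ≤ r) {σ τ : List Bool → List Bool} (hσ : σ ∈ Mset r)
    (hτ : IsTreeAut τ) (x : List Bool) :
    Qr r (σ ∘ τ) x = Pr r σ [] * Qr r τ x + Qr r σ (τ x) := by
  obtain ⟨σ_aut, Pr_const⟩ := hσ
  have not_isUnit_two : ¬IsUnit (2 : ℤ_[2]) := mod_cast (PadicInt.prime_p (p := 2)).not_isUnit
  refine sub_eq_zero.1 <| eq_zero_of_eq_mul_sum not_isUnit_two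
    (D := fun y => Qr r (σ ∘ τ) y - (Pr r σ [] * Qr r τ y + Qr r σ (τ y)))
    (Wset r 1) (fun y u => y ++ u ++ [false]) (fun y => ?_) x
  rw [Qr_eq_two_mul_sum hr (σ ∘ τ), Qr_eq_two_mul_sum hr τ, Qr_eq_two_mul_sum hr σ,
    ← hτ.sum_apply_append r y fun z => (par σ z : ℤ_[2]) + Qr r σ (z ++ [false]),
    mul_left_comm, ← mul_add, ← mul_sub, Finset.mul_sum, ← Finset.sum_add_distrib,
    ← Finset.sum_sub_distrib]
  refine congrArg (2 * ·) (Finset.sum_congr rfl fun u _ => ?_)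
  have node_identity := σ_aut.par_comp_add_Qr_apply_false hτ r (y ++ u)
  rw [Pr_const (τ (y ++ u)) []] at node_identity
  linear_combination node_identity

/-- For every integer `r ≥ 1`, every `σ ∈ M_{r,∞}`, every
`τ ∈ Aut(T_∞)`, and every word `x`, one has `P_r(σ∘τ, x) = P_r(σ) · P_r(τ, x)` in `ℤ₂`
(the common value `P_r(σ)` being realized as `Pr r σ []`). -/
theorem Pr_comp (r : ℕ) (hr : 1 ≤ r) (σ τ : List Bool → List Bool)
    (hσ : σ ∈ Mset r) (hτ : IsTreeAut τ) (x : List Bool) :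
    Pr r (σ ∘ τ) x = Pr r σ [] * Pr r τ x := by
  have children_diff := hτ.Qr_apply_true_sub_false r σ x
  rw [hσ.2 (τ x) []] at children_diff
  calc
    Pr r (σ ∘ τ) x =
        (-1) ^ par σ (τ x) * (-1) ^ par τ x +
          Pr r σ [] * (Qr r τ (x ++ [true]) - Qr r τ (x ++ [false])) +
          (Qr r σ (τ (x ++ [true])) - Qr r σ (τ (x ++ [false]))) := by
      rw [Pr, hσ.1.neg_one_pow_par_comp hτ, Qr_comp hr hσ hτ, Qr_comp hr hσ hτ]
      ring
    _ = Pr r σ [] * ((-1) ^ par τ x + Qr r τ (x ++ [true]) - Qr r τ (x ++ [false])) := by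
      rw [children_diff]
      ring
end

section
/- Fix an integer r ≥ 1. For each i ∈ {1, …, r}, let α_i be the automorphism of T_∞ determined by: Par(α_i, w) = 1 if w = a^{i−1}(ba^{r−1})^n for some integer n ≥ 0, and Par(α_i, w) = 0 otherwise (here a^j denotes j consecutive copies of the symbol a, and (ba^{r−1})^n denotes n consecutive copies of the word ba^{r−1}). Then P_r(α_i, x) = 1 for every word x; in particular each α_i lies in B_{r,∞}. -/
/-!
If `|p| < |v|` and `|t| = m |v|`, then `x t` is of the form `p vⁿ` exactly when `x` is and `t = vᵐ`.
Let `v = b u` with `|v| = r`, and let `σ` have odd parity exactly at the words `p vⁿ`. For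
`w ∈ W(r,i)` the word `s w` has length `r i`, so `σ` is odd at `x s w` if and only if it is odd
at `x` and `s w = vⁱ`. The `r`-th letter of `w` must be `a`, whereas that of `u vⁱ⁻¹` is `b` as
soon as `i ≥ 2`; hence only `i = 1`, `s = b`, `w = u` survive, giving `Q_r(σ,xa) = 0`,
`Q_r(σ,xb) = 2 Par(σ,x)` and `P_r(σ,x) = (-1) ^ Par(σ,x) + 2 Par(σ,x) = 1`.
-/

/-- The language of all words `p vⁿ`, `n ≥ 0`; for suitable `p` and `v` it is the set of nodes at
which one of the generators acts with odd parity. -/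
def powerWords {A : Type*} (p v : List A) : Set (List A) :=
  {w | ∃ n : ℕ, w = p ++ (List.replicate n v).flatten}

theorem append_mem_powerWords_iff {A : Type*} {p v x t : List A} {m : ℕ}
    (hp : p.length < v.length) (ht : t.length = m * v.length) :
    x ++ t ∈ powerWords p v ↔ x ∈ powerWords p v ∧ t = (List.replicate m v).flatten := by
  have powerWord_add (k : ℕ) : p ++ (List.replicate (k + m) v).flatten =
      (p ++ (List.replicate k v).flatten) ++ (List.replicate m v).flatten := by
    rw [List.replicate_add, List.flatten_append, List.append_assoc]
  constructor
  · rintro ⟨n, hn⟩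
    have hlen : x.length + m * v.length = p.length + n * v.length := by
      simpa [ht] using congrArg List.length hn
    have hmn : m ≤ n := by
      by_contra! hnm
      have : (n + 1) * v.length ≤ m * v.length := Nat.mul_le_mul_right _ hnm
      rw [Nat.succ_mul] at this
      omega
    obtain ⟨k, rfl⟩ := Nat.exists_eq_add_of_le' hmn
    rw [powerWord_add] at hn
    obtain ⟨hx, htv⟩ := List.append_inj' hn (by simp [ht])
    exact ⟨⟨k, hx⟩, htv⟩
  · rintro ⟨⟨k, rfl⟩, rfl⟩
    exact ⟨k + m, (powerWord_add k).symm⟩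

theorem mem_Wset {r i : ℕ} {w : List Bool} :
    w ∈ Wset r i ↔ w.length = r * i - 1 ∧
      ∀ k (hk : k < w.length), r ∣ k + 1 → w[k] = false := by
  simp only [Wset, Finset.mem_image, Finset.mem_filter, Finset.mem_univ, true_and]
  constructor
  · rintro ⟨s, hs, rfl⟩
    refine ⟨List.length_ofFn, fun k hk hdvd => ?_⟩
    rw [List.getElem_ofFn]
    exact hs _ hdvd
  · rintro ⟨hlen, hw⟩
    exact ⟨fun j => w[j], fun j hdvd => hw j _ hdvd, List.ext_getElem (by simp [hlen]) (by simp)⟩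

section

variable {r : ℕ} {u : List Bool}

theorem mem_Wset_one_of_length (hu : u.length + 1 = r) : u ∈ Wset r 1 := by
  refine mem_Wset.2 ⟨by omega, fun k hk hdvd => ?_⟩
  have := Nat.le_of_dvd k.succ_pos hdvd
  omega

theorem cons_eq_flatten_replicate_iff {j : ℕ} {s : Bool} {w : List Bool}
    (hu : u.length + 1 = r) (hw : w ∈ Wset r (j + 1)) :
    s :: w = (List.replicate (j + 1) (true :: u)).flatten ↔ s = true ∧ j = 0 ∧ w = u := by
  rw [List.replicate_succ, List.flatten_cons, List.cons_append, List.cons.injEq]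
  refine and_congr_right fun _ => ?_
  cases j with
  | zero => simp
  | succ j =>
    simp only [Nat.succ_ne_zero, false_and, iff_false]
    rintro rfl
    simpa [List.replicate_succ] using (mem_Wset.1 hw).2 u.length (by simp) (by rw [hu])

variable {p : List Bool} {σ : List Bool → List Bool}

theorem par_append_eq_ite (hp : p.length < r) (hu : u.length + 1 = r)
    (hσ : ∀ w, par σ w = 1 ↔ w ∈ powerWords p (true :: u)) {j : ℕ} {w : List Bool}
    (hw : w ∈ Wset r (j + 1)) (x : List Bool) (s : Bool) :
    par σ (x ++ [s] ++ w) = if s = true ∧ j = 0 ∧ w = u then par σ x else 0 := by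
  have hlen : (s :: w).length = (j + 1) * (true :: u).length := by
    have hpos : 0 < r * (j + 1) := Nat.mul_pos (by omega) j.succ_pos
    rw [List.length_cons, List.length_cons, (mem_Wset.1 hw).1, hu, Nat.mul_comm (j + 1)]
    omega
  have hodd : par σ (x ++ [s] ++ w) = 1 ↔ par σ x = 1 ∧ s = true ∧ j = 0 ∧ w = u := by
    rw [List.append_assoc, List.singleton_append, hσ, hσ,
      append_mem_powerWords_iff (by simpa [hu] using hp) hlen, cons_eq_flatten_replicate_iff hu hw]
  have := par_eq_zero_or_one σ (x ++ [s] ++ w)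
  have := par_eq_zero_or_one σ x
  split_ifs <;> grind

theorem Qr_append_false (hp : p.length < r) (hu : u.length + 1 = r)
    (hσ : ∀ w, par σ w = 1 ↔ w ∈ powerWords p (true :: u)) (x : List Bool) :
    Qr r σ (x ++ [false]) = 0 := by
  have hsum (j : ℕ) : ∑ w ∈ Wset r (j + 1), (par σ (x ++ [false] ++ w) : ℤ_[2]) = 0 :=
    Finset.sum_eq_zero fun w hw => by rw [par_append_eq_ite hp hu hσ hw]; simp
  simp only [Qr, hsum, mul_zero, tsum_zero]

theorem Qr_append_true (hp : p.length < r) (hu : u.length + 1 = r)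
    (hσ : ∀ w, par σ w = 1 ↔ w ∈ powerWords p (true :: u)) (x : List Bool) :
    Qr r σ (x ++ [true]) = 2 * par σ x := by
  have hsum (j : ℕ) : ∑ w ∈ Wset r (j + 1), (par σ (x ++ [true] ++ w) : ℤ_[2]) =
      if j = 0 then (par σ x : ℤ_[2]) else 0 := by
    rw [Finset.sum_congr rfl fun w hw => by rw [par_append_eq_ite hp hu hσ hw]]
    split_ifs with hj
    · simp [hj, mem_Wset_one_of_length hu]
    · simp [hj]
  simp only [Qr, hsum]
  rw [tsum_eq_single 0 fun j hj => by rw [if_neg hj, mul_zero]]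
  simp

theorem Pr_eq_one (hp : p.length < r) (hu : u.length + 1 = r)
    (hσ : ∀ w, par σ w = 1 ↔ w ∈ powerWords p (true :: u)) (x : List Bool) :
    Pr r σ x = 1 := by
  rw [Pr, Qr_append_true hp hu hσ, Qr_append_false hp hu hσ]
  rcases par_eq_zero_or_one σ x with h | h <;> norm_num [h]

theorem Pink_generators_in_B_general (hp : p.length < r) (hu : u.length + 1 = r)
    (haut : IsTreeAut σ) (hσ : ∀ w, par σ w = 1 ↔ w ∈ powerWords p (true :: u)) :
    (∀ x : List Bool, Pr r σ x = 1) ∧ σ ∈ Bset r := by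
  have hPr := Pr_eq_one hp hu hσ
  exact ⟨hPr, ⟨haut, fun x y => (hPr x).trans (hPr y).symm⟩, hPr []⟩

end

/-- Fix `r ≥ 1`. For `i ∈ {1,…,r}`, let `α` be the automorphism of `T_∞`
determined by `Par(α, w) = 1` iff `w = a^{i−1}(ba^{r−1})^n` for some `n ≥ 0`
(with `a = false`, `b = true`). Then `P_r(α, x) = 1` for every word `x`; in particular
`α` lies in `B_{r,∞}`. -/
theorem Pink_generators_in_B (r : ℕ) (hr : 1 ≤ r) (i : ℕ) (hi1 : 1 ≤ i) (hir : i ≤ r)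
    (α : List Bool → List Bool) (hα : IsTreeAut α)
    (hpar : ∀ w : List Bool, (par α w = 1 ↔ ∃ n : ℕ,
      w = List.replicate (i-1) false ++
        (List.replicate n (true :: List.replicate (r-1) false)).flatten)) :
    (∀ x : List Bool, Pr r α x = 1) ∧ α ∈ Bset r :=
  Pink_generators_in_B_general (p := List.replicate (i - 1) false)
    (u := List.replicate (r - 1) false) (by grind) (by grind) hα hpar
end
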